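/- Fix 0 < r < 1 and 0 ≤ α < 1, and set r(T) := r/T^α (assume T large enough that r(T) ∈ (0,1)). Let p^{(T)}_T be the law at time T of the lazy random walk with rate r(T). Then L_T/√(T^{1−α}) converges weakly to the normal distribution N(0, r); concretely, for every bounded continuous function g : ℝ → ℝ, Σ_{x∈ℤ} p^{(T)}_T(x) · g(x/√(T^{1−α})) → (1/√(2πr)) ∫_ℝ g(x) e^{−x²/(2r)} dx as T → ∞. -/

import Mathlib

open scoped Real
open Filter Topology

/-- The lazy random walk on `ℤ` with movement rate `r`: probability mass function
at time `m`, started at the origin. -/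
noncomputable def lazyRW (r : ℝ) : ℕ → ℤ → ℝ
  | 0, x => if x = 0 then 1 else 0
  | m + 1, x =>
      (1 - r) * lazyRW r m x + (r / 2) * (lazyRW r m (x - 1) + lazyRW r m (x + 1))

open MeasureTheory ProbabilityTheory
open scoped BoundedContinuousFunction NNReal unitInterval

/-!
The generating function `∑ x, p_m(x) z ^ x` is the `m`-th power of the generating function
`1 - r + (r / 2) (z + z⁻¹)` of a single step. At `z = 1` it gives the total mass; at
`z = exp (i t / s)` it gives the characteristic function `(1 - r (1 - cos (t / s))) ^ m` of the walk
rescaled by `s`. Since `1 - cos y ∼ y ^ 2 / 2` at `0`, rates `ρ_T` and scales `s_T → ∞` with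
`T ρ_T / s_T ^ 2 → v` make these powers tend to `exp (- v t ^ 2 / 2)`, and Lévy's continuity theorem
concludes.
-/

section GeneratingFunction

lemma lazyRW_nonneg {r : ℝ} (hr : r ∈ Set.Icc 0 1) (m : ℕ) (x : ℤ) : 0 ≤ lazyRW r m x := by
  induction m generalizing x with
  | zero => rw [lazyRW]; split_ifs <;> norm_num
  | succ m ih =>
    have hstay : 0 ≤ (1 - r) * lazyRW r m x := mul_nonneg (sub_nonneg.2 hr.2) (ih x)
    have hmove : 0 ≤ r / 2 * (lazyRW r m (x - 1) + lazyRW r m (x + 1)) :=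
      mul_nonneg (div_nonneg hr.1 zero_le_two) (add_nonneg (ih _) (ih _))
    exact add_nonneg hstay hmove

lemma hasSum_lazyRW_smul_zpow {K : Type*} [Field K] [TopologicalSpace K] [IsTopologicalSemiring K]
    [Algebra ℝ K] (r : ℝ) (m : ℕ) {z : K} (hz : z ≠ 0) :
    HasSum (fun x : ℤ => lazyRW r m x • z ^ x)
      (((1 - r) • 1 + (r / 2) • (z + z⁻¹)) ^ m) := by
  set φ : K := (1 - r) • 1 + (r / 2) • (z + z⁻¹)
  induction m with
  | zero =>
    convert hasSum_ite_eq (0 : ℤ) (1 : K) using 1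
    · ext x
      by_cases hx : x = 0 <;> simp [lazyRW, hx]
    · simp
  | succ m ih =>
    have hright := ((Equiv.subRight (1 : ℤ)).hasSum_iff.2 ih).mul_left z
    have hleft := ((Equiv.addRight (1 : ℤ)).hasSum_iff.2 ih).mul_left z⁻¹
    have hstep := (ih.mul_left (algebraMap ℝ K (1 - r))).add
      ((hright.add hleft).mul_left (algebraMap ℝ K (r / 2)))
    have hsum : φ ^ (m + 1) = algebraMap ℝ K (1 - r) * φ ^ m
        + algebraMap ℝ K (r / 2) * (z * φ ^ m + z⁻¹ * φ ^ m) := by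
      rw [pow_succ']
      simp only [φ, Algebra.smul_def]
      ring
    rw [hsum]
    refine hstep.congr_fun fun x => ?_
    simp only [lazyRW, Function.comp_apply, Equiv.subRight_apply, Equiv.coe_addRight,
      zpow_sub_one₀ hz, zpow_add_one₀ hz, Algebra.smul_def, map_add, map_mul]
    field_simp

lemma hasSum_lazyRW (r : ℝ) (m : ℕ) : HasSum (lazyRW r m) 1 := by
  simpa [one_add_one_eq_two] using hasSum_lazyRW_smul_zpow r m (one_ne_zero (α := ℝ))

lemma hasSum_lazyRW_smul_exp (r θ : ℝ) (m : ℕ) :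
    HasSum (fun x : ℤ => lazyRW r m x • Complex.exp (θ * Complex.I) ^ x)
      (((1 - r + r * Real.cos θ) ^ m : ℝ) : ℂ) := by
  have hstep : (1 - r) • 1 + (r / 2) • (Complex.exp (θ * Complex.I)
      + (Complex.exp (θ * Complex.I))⁻¹) = ((1 - r + r * Real.cos θ : ℝ) : ℂ) := by
    rw [← Complex.exp_neg, ← neg_mul, ← Complex.two_cos]
    simp only [Complex.real_smul]
    push_cast
    ring
  rw [Complex.ofReal_pow, ← hstep]
  exact hasSum_lazyRW_smul_zpow r m (Complex.exp_ne_zero _)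

end GeneratingFunction

section ScaledLaw

/-- The law at time `m` of the lazy random walk with rate `r`. The rate is bundled as a point of the
unit interval, outside of which `lazyRW r m` may take negative values. -/
noncomputable def lazyRWPMF (r : I) (m : ℕ) : PMF ℤ :=
  ⟨fun x => ENNReal.ofReal (lazyRW r m x), by
    have h := hasSum_lazyRW r m
    have hofReal := ENNReal.ofReal_tsum_of_nonneg (lazyRW_nonneg r.2 m) h.summable
    rw [h.tsum_eq, ENNReal.ofReal_one] at hofReal
    exact hofReal ▸ ENNReal.summable.hasSum⟩

lemma toReal_lazyRWPMF (r : I) (m : ℕ) (x : ℤ) : (lazyRWPMF r m x).toReal = lazyRW r m x :=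
  ENNReal.toReal_ofReal (lazyRW_nonneg r.2 m x)

/-- The law of `L / s`, where `L` is the position at time `m` of the lazy random walk with rate
`r`. -/
noncomputable def scaledLazyRWLaw (r : I) (m : ℕ) (s : ℝ) : ProbabilityMeasure ℝ :=
  ⟨(lazyRWPMF r m).toMeasure.map fun x : ℤ => (x : ℝ) / s,
    Measure.isProbabilityMeasure_map .of_discrete⟩

lemma integral_scaledLazyRWLaw {E : Type*} [NormedAddCommGroup E] [NormedSpace ℝ E]
    [CompleteSpace E] (r : I) (m : ℕ) (s : ℝ) (f : ℝ →ᵇ E) :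
    ∫ x, f x ∂(scaledLazyRWLaw r m s : Measure ℝ) = ∑' x : ℤ, lazyRW r m x • f (x / s) := by
  have hint : Integrable (fun x : ℤ => f (x / s)) (lazyRWPMF r m).toMeasure :=
    .of_bound .of_discrete ‖f‖ (.of_forall fun _ => f.norm_coe_le_norm _)
  calc ∫ x, f x ∂(scaledLazyRWLaw r m s : Measure ℝ)
      = ∫ x : ℤ, f (x / s) ∂(lazyRWPMF r m).toMeasure :=
        integral_map .of_discrete f.continuous.aestronglyMeasurable
    _ = ∑' x : ℤ, lazyRW r m x • f (x / s) := by
        simp only [PMF.integral_eq_tsum _ _ hint, toReal_lazyRWPMF]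

lemma charFun_scaledLazyRWLaw (r : I) (m : ℕ) (s t : ℝ) :
    charFun (scaledLazyRWLaw r m s : Measure ℝ) t
      = (((1 - r + r * Real.cos (t / s)) ^ m : ℝ) : ℂ) := by
  rw [charFun_eq_integral_innerProbChar, integral_scaledLazyRWLaw,
    ← (hasSum_lazyRW_smul_exp r (t / s) m).tsum_eq]
  refine tsum_congr fun x => ?_
  rw [BoundedContinuousFunction.innerProbChar_apply, ← Complex.exp_int_mul]
  congr 2
  simp only [RCLike.inner_apply, conj_trivial, Complex.ofReal_mul, Complex.ofReal_div,
    Complex.ofReal_intCast]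
  ring

end ScaledLaw

section Limit

lemma one_sub_cos_eq_sinc_sq (y : ℝ) :
    1 - Real.cos y = y ^ 2 / 2 * Real.sinc (y / 2) ^ 2 := by
  rcases eq_or_ne y 0 with rfl | hy
  · simp
  · have hsin := Real.sin_sq_eq_half_sub (y / 2)
    rw [mul_div_cancel₀ y two_ne_zero] at hsin
    rw [Real.sinc_of_ne_zero (by positivity), div_pow, hsin]
    field_simp

variable {s : ℕ → ℝ}

lemma tendsto_one_sub_add_mul_cos_pow {ρ : ℕ → ℝ} {v : ℝ} (hs : Tendsto s atTop atTop)
    (hv : Tendsto (fun T => T * ρ T / s T ^ 2) atTop (𝓝 v)) (t : ℝ) :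
    Tendsto (fun T => (1 - ρ T + ρ T * Real.cos (t / s T)) ^ T) atTop
      (𝓝 (Real.exp (-(v * t ^ 2 / 2)))) := by
  have hsinc : Tendsto (fun T => Real.sinc (t / s T / 2)) atTop (𝓝 1) := by
    have harg : Tendsto (fun T => t / s T / 2) atTop (𝓝 0) := by
      simpa using (hs.const_div_atTop t).div_const 2
    simpa [Function.comp_def] using (Real.continuous_sinc.tendsto 0).comp harg
  have hexponent : Tendsto (fun T : ℕ => T * -(ρ T * (1 - Real.cos (t / s T)))) atTop
      (𝓝 (-(v * t ^ 2 / 2))) := by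
    have hlim := ((hv.mul_const (t ^ 2 / 2)).mul (hsinc.pow 2)).neg
    convert hlim using 2 with T
    · rw [one_sub_cos_eq_sinc_sq]
      ring
    · ring
  refine (Real.tendsto_one_add_pow_exp_of_tendsto hexponent).congr fun T => ?_
  congr 1
  ring

lemma tendsto_scaledLazyRWLaw_gaussianReal {ρ : ℕ → I} {v : ℝ≥0} (hs : Tendsto s atTop atTop)
    (hv : Tendsto (fun T => T * (ρ T : ℝ) / s T ^ 2) atTop (𝓝 v)) :
    Tendsto (fun T => scaledLazyRWLaw (ρ T) T (s T)) atTop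
      (𝓝 ⟨gaussianReal 0 v, inferInstance⟩) := by
  refine ProbabilityMeasure.tendsto_iff_tendsto_charFun.2 fun t => ?_
  have hcharFun : charFun (gaussianReal 0 v) t = (Real.exp (-(v * t ^ 2 / 2)) : ℂ) := by
    simp [charFun_gaussianReal]
  simp only [charFun_scaledLazyRWLaw, ProbabilityMeasure.coe_mk, hcharFun]
  exact (Complex.continuous_ofReal.tendsto _).comp (tendsto_one_sub_add_mul_cos_pow hs hv t)

theorem lazy_rw_crossover_gaussian_general {ρ : ℕ → ℝ} {v : ℝ≥0}
    (hρ : ∀ᶠ T in atTop, ρ T ∈ Set.Icc 0 1) (hs : Tendsto s atTop atTop)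
    (hv : Tendsto (fun T => T * ρ T / s T ^ 2) atTop (𝓝 v)) (g : ℝ →ᵇ ℝ) :
    Tendsto (fun T => ∑' x : ℤ, lazyRW (ρ T) T x * g (x / s T)) atTop
      (𝓝 (∫ x, g x ∂gaussianReal 0 v)) := by
  let ρ' : ℕ → I := fun T => Set.projIcc 0 1 zero_le_one (ρ T)
  have hρ' : ∀ᶠ T in atTop, (ρ' T : ℝ) = ρ T :=
    hρ.mono fun T hT => congrArg Subtype.val (Set.projIcc_of_mem zero_le_one hT)
  have hv' : Tendsto (fun T => T * (ρ' T : ℝ) / s T ^ 2) atTop (𝓝 v) :=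
    hv.congr' (hρ'.mono fun T hT => by simp only [hT])
  have hlim := ProbabilityMeasure.tendsto_iff_forall_integral_tendsto.1
    (tendsto_scaledLazyRWLaw_gaussianReal hs hv') g
  refine hlim.congr' (hρ'.mono fun T hT => ?_)
  simp only [integral_scaledLazyRWLaw, hT, smul_eq_mul]

end Limit

section Crossover

lemma eventually_div_rpow_mem_Icc {r α : ℝ} (hr : r ∈ Set.Icc 0 1) (hα : 0 ≤ α) :
    ∀ᶠ x : ℝ in atTop, r / x ^ α ∈ Set.Icc 0 1 := by
  filter_upwards [eventually_ge_atTop 1] with x hx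
  have hpow : 1 ≤ x ^ α := Real.one_le_rpow hx hα
  have hpos : 0 < x ^ α := zero_lt_one.trans_le hpow
  exact ⟨div_nonneg hr.1 hpos.le, (div_le_one hpos).2 (hr.2.trans hpow)⟩

lemma tendsto_mul_div_rpow_div_sq_sqrt_rpow (r α : ℝ) :
    Tendsto (fun x : ℝ => x * (r / x ^ α) / √(x ^ (1 - α)) ^ 2) atTop (𝓝 r) := by
  refine tendsto_const_nhds.congr' ?_
  filter_upwards [eventually_gt_atTop 0] with x hx
  rw [Real.sq_sqrt (by positivity), Real.rpow_sub hx, Real.rpow_one]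
  field_simp

lemma tendsto_sqrt_rpow_atTop {β : ℝ} (hβ : 0 < β) :
    Tendsto (fun x : ℝ => √(x ^ β)) atTop atTop :=
  Real.tendsto_sqrt_atTop.comp (tendsto_rpow_atTop hβ)

lemma integral_gaussianReal_eq_mul_integral_exp {v : ℝ≥0} (hv : v ≠ 0) (μ : ℝ) (f : ℝ → ℝ) :
    ∫ x, f x ∂gaussianReal μ v
      = 1 / √(2 * π * v) * ∫ x, f x * Real.exp (-(x - μ) ^ 2 / (2 * v)) := by
  rw [integral_gaussianReal_eq_integral_smul hv, ← integral_const_mul]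
  congr with x
  rw [gaussianPDFReal, smul_eq_mul]
  ring

end Crossover

/-- Crossover regime `r(T) = r / T^α`, `0 ≤ α < 1`: the lazy random walk satisfies
`L_T / √(T^{1-α}) ⇒ N(0, r)`. -/
theorem lazy_rw_crossover_gaussian (r α : ℝ) (hr0 : 0 < r) (hr1 : r < 1)
    (hα0 : 0 ≤ α) (hα1 : α < 1) :
    ∀ g : ℝ → ℝ, Continuous g → (∃ M : ℝ, ∀ x : ℝ, |g x| ≤ M) →
      Tendsto
        (fun T : ℕ =>
          ∑' x : ℤ, lazyRW (r / (T : ℝ) ^ α) T x * g ((x : ℝ) / Real.sqrt ((T : ℝ) ^ (1 - α))))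
        atTop
        (𝓝 ((1 / Real.sqrt (2 * π * r)) * ∫ x : ℝ, g x * Real.exp (-x ^ 2 / (2 * r)))) := by
  intro g hg ⟨M, hM⟩
  lift r to ℝ≥0 using hr0.le
  have hcast : Tendsto (fun T : ℕ => (T : ℝ)) atTop atTop := tendsto_natCast_atTop_atTop
  have hrate := hcast.eventually (eventually_div_rpow_mem_Icc ⟨hr0.le, hr1.le⟩ hα0)
  have hscale := (tendsto_sqrt_rpow_atTop (sub_pos.2 hα1)).comp hcast
  have hvariance := (tendsto_mul_div_rpow_div_sq_sqrt_rpow r α).comp hcast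
  simpa [integral_gaussianReal_eq_mul_integral_exp (NNReal.coe_pos.1 hr0).ne'] using
    lazy_rw_crossover_gaussian_general hrate hscale hvariance
      (BoundedContinuousFunction.ofNormedAddCommGroup g hg M hM)
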